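/- Let n ≥ 1 and 0 ≤ q ≤ n be integers and a = (a_1, …, a_n) ∈ ℝ^n. For u > 0 set φ(t, u) = t/(1 − e^{−u t}) for t ≠ 0 and φ(0, u) = 1/u, and define g_{a,q}(u) = ( Σ_{S ⊆ {1,…,n}, |S| = q} exp(−u Σ_{j∈S} a_j) ) · Π_{j=1}^{n} φ(a_j, u). Then for every u > 0, |g_{a,q}(u)| ≤ C(n, q) · Π_{j=1}^{n} ( |a_j| + 1/u ), where C(n, q) is the binomial coefficient n choose q. In particular, for every u_0 > 0, g_{a,q} is bounded on [u_0, ∞), uniformly for a in a bounded subset of ℝ^n. -/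

import Mathlib

/-!
The identity `e^{-ut} φ(t, u) = φ(-t, u)` absorbs each exponential weight into the product:
the term of `g_{a,q}(u)` indexed by `S` is `∏_j φ(±a_j, u)`, with the sign `-` exactly for `j ∈ S`.
The inequality `x + 1 ≤ e^x` gives `0 ≤ φ(t, u) ≤ |t| + 1/u`, which is insensitive to the sign
of `t`, so each of the `n choose q` terms is at most `∏_j (|a_j| + 1/u)`. This bound is decreasing
in `u` and increasing in each `|a_j|`, which gives the uniform bound.
-/

open Finset

/-- `φ(t, u) = t / (1 − e^{−u t})` for `t ≠ 0`, and `φ(0, u) = 1/u`. -/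
noncomputable def phiFactor (t u : ℝ) : ℝ :=
  if t = 0 then 1 / u else t / (1 - Real.exp (-(u * t)))

/-- `g_{a,q}(u) = (Σ_{S ⊆ {1,…,n}, |S| = q} e^{−u Σ_{j∈S} a_j}) · Π_j φ(a_j, u)`. -/
noncomputable def heatDensity (n q : ℕ) (a : Fin n → ℝ) (u : ℝ) : ℝ :=
  (∑ S ∈ Finset.powersetCard q (Finset.univ : Finset (Fin n)),
      Real.exp (-(u * ∑ j ∈ S, a j))) * ∏ j, phiFactor (a j) u

lemma phiFactor_nonneg {u : ℝ} (hu : 0 < u) (t : ℝ) : 0 ≤ phiFactor t u := by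
  unfold phiFactor
  split_ifs with h
  · positivity
  · rcases lt_or_gt_of_ne h with ht | ht
    · apply div_nonneg_of_nonpos ht.le
      have : 1 ≤ Real.exp (-(u * t)) := Real.one_le_exp (by nlinarith)
      linarith
    · apply div_nonneg ht.le
      have : Real.exp (-(u * t)) ≤ 1 := Real.exp_le_one_iff.2 (by nlinarith)
      linarith

lemma exp_mul_phiFactor {u : ℝ} (hu : 0 < u) (t : ℝ) :
    Real.exp (-(u * t)) * phiFactor t u = phiFactor (-t) u := by
  unfold phiFactor
  by_cases h : t = 0
  · simp [h]
  · have hne : u * t ≠ 0 := mul_ne_zero hu.ne' h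
    have h1 : 1 - Real.exp (-(u * t)) ≠ 0 := by
      rw [sub_ne_zero, ne_comm, Ne, Real.exp_eq_one_iff]
      simpa using hne
    have h2 : 1 - Real.exp (u * t) ≠ 0 := by
      rw [sub_ne_zero, ne_comm, Ne, Real.exp_eq_one_iff]
      exact hne
    have h3 : Real.exp (-(u * t)) * Real.exp (u * t) = 1 := by
      rw [← Real.exp_add]; simp
    rw [if_neg h, if_neg (neg_ne_zero.2 h), mul_neg, neg_neg, mul_div_assoc', div_eq_div_iff h1 h2]
    linear_combination (-t) * h3

lemma phiFactor_le {u : ℝ} (hu : 0 < u) (t : ℝ) : phiFactor t u ≤ |t| + 1 / u := by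
  have hu' : u * (1 / u) = 1 := by field_simp
  have hi : 0 < 1 / u := by positivity
  -- The case `t > 0`; the case `t < 0` reduces to it by `φ(t, u) ≤ e^{-ut} φ(t, u) = φ(-t, u)`.
  have key : ∀ s : ℝ, 0 < s → s / (1 - Real.exp (-(u * s))) ≤ s + 1 / u := by
    intro s hs
    have hus : 0 < u * s := mul_pos hu hs
    have h1 : Real.exp (-(u * s)) < 1 := by
      rw [← Real.exp_zero]
      exact Real.exp_lt_exp.2 (by linarith)
    have h3 : Real.exp (-(u * s)) * Real.exp (u * s) = 1 := by
      rw [← Real.exp_add]; simp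
    have h4 : Real.exp (-(u * s)) * (u * s + 1) ≤ 1 := by
      have := mul_le_mul_of_nonneg_left (Real.add_one_le_exp (u * s)) (Real.exp_pos (-(u * s))).le
      rwa [h3] at this
    rw [div_le_iff₀ (by linarith)]
    have h5 : s + 1 / u = (u * s + 1) * (1 / u) := by linear_combination (-s) * hu'
    have h6 := mul_le_mul_of_nonneg_right h4 hi.le
    have h7 : (s + 1 / u) * Real.exp (-(u * s))
        = Real.exp (-(u * s)) * (u * s + 1) * (1 / u) := by rw [h5]; ring
    linarith
  rcases lt_trichotomy t 0 with ht | rfl | ht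
  · have hp := key (-t) (by linarith)
    have hle : phiFactor t u ≤ phiFactor (-t) u := by
      rw [← exp_mul_phiFactor hu]
      exact le_mul_of_one_le_left (phiFactor_nonneg hu t) (Real.one_le_exp (by nlinarith))
    rw [abs_of_neg ht]
    refine hle.trans ?_
    rw [phiFactor, if_neg (by linarith)]
    exact hp
  · simp [phiFactor]
  · rw [abs_of_pos ht, phiFactor, if_neg ht.ne']
    exact key t ht

/-- Each summand of `g_{a,q}(u)` is a product of factors `φ(±a_j, u)`. -/
lemma exp_mul_prod_phiFactor {n : ℕ} {u : ℝ} (hu : 0 < u) (a : Fin n → ℝ) (S : Finset (Fin n)) :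
    Real.exp (-(u * ∑ j ∈ S, a j)) * ∏ j, phiFactor (a j) u
      = ∏ j, phiFactor (if j ∈ S then -a j else a j) u := by
  have h : Real.exp (-(u * ∑ j ∈ S, a j))
      = ∏ j, if j ∈ S then Real.exp (-(u * a j)) else 1 := by
    rw [Finset.prod_ite_mem, Finset.univ_inter, ← Real.exp_sum, Finset.mul_sum,
      Finset.sum_neg_distrib]
  rw [h, ← Finset.prod_mul_distrib]
  refine Finset.prod_congr rfl fun j _ => ?_
  split_ifs
  · exact exp_mul_phiFactor hu _
  · exact one_mul _

lemma abs_heatDensity_le (n q : ℕ) (a : Fin n → ℝ) {u : ℝ} (hu : 0 < u) :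
    |heatDensity n q a u| ≤ (n.choose q : ℝ) * ∏ j, (|a j| + 1 / u) := by
  have h0 : 0 ≤ heatDensity n q a u :=
    mul_nonneg (Finset.sum_nonneg fun _ _ => (Real.exp_pos _).le)
      (Finset.prod_nonneg fun _ _ => phiFactor_nonneg hu _)
  rw [abs_of_nonneg h0, heatDensity, Finset.sum_mul]
  have hS : ∀ S ∈ Finset.powersetCard q (Finset.univ : Finset (Fin n)),
      Real.exp (-(u * ∑ j ∈ S, a j)) * ∏ j, phiFactor (a j) u ≤ ∏ j, (|a j| + 1 / u) := by
    intro S _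
    rw [exp_mul_prod_phiFactor hu]
    refine Finset.prod_le_prod (fun _ _ => phiFactor_nonneg hu _) fun j _ => ?_
    refine (phiFactor_le hu _).trans_eq ?_
    split_ifs <;> simp
  have := Finset.sum_le_card_nsmul _ _ _ hS
  simpa [Finset.card_powersetCard, nsmul_eq_mul] using this

/-- For every `u > 0`, `|g_{a,q}(u)| ≤ (n choose q) · Π_j (|a_j| + 1/u)`; in particular,
for every `u₀ > 0`, `g_{a,q}` is bounded on `[u₀, ∞)`, uniformly for `a` in a bounded
subset of `ℝ^n`. -/
theorem heatDensity_bound (n q : ℕ) (hn : 1 ≤ n) (hq : q ≤ n) :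
    (∀ (a : Fin n → ℝ) (u : ℝ), 0 < u →
      |heatDensity n q a u| ≤ (n.choose q : ℝ) * ∏ j, (|a j| + 1 / u)) ∧
    (∀ u₀ : ℝ, 0 < u₀ → ∀ R : ℝ, ∃ Cb : ℝ, ∀ a : Fin n → ℝ, (∀ j, |a j| ≤ R) →
      ∀ u : ℝ, u₀ ≤ u → |heatDensity n q a u| ≤ Cb) := by
  refine ⟨fun a u hu => abs_heatDensity_le n q a hu, fun u₀ hu₀ R => ?_⟩
  refine ⟨(n.choose q : ℝ) * ∏ _j : Fin n, (R + 1 / u₀), fun a ha u hu => ?_⟩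
  have hpos : 0 < u := hu₀.trans_le hu
  refine (abs_heatDensity_le n q a hpos).trans ?_
  refine mul_le_mul_of_nonneg_left ?_ (Nat.cast_nonneg _)
  exact Finset.prod_le_prod (fun j _ => by positivity)
    fun j _ => add_le_add (ha j) (one_div_le_one_div_of_le hu₀ hu)
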